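/- Let X be a complex Hilbert space, let A and B be closed linear relations in X forming a dual pair (A ⊆ B*) such that (A*)_s(f) = B_s(f) for all f ∈ D(B), (B*)_s(f) = A_s(f) for all f ∈ D(A), B*(0) ∩ N(A*) = {0}, and A*(0) ∩ N(B*) = {0}. Let Ã be a quasi-selfadjoint extension of {A,B}, i.e., a closed relation with A ⊆ Ã ⊆ B* and dim(D(Ã)/D(A)) = dim(D((Ã)*)/D(B)). Then n(A*,B) is even and n(A*,B)/2 = dim(D(B*)/D(Ã)) = dim(D(A*)/D((Ã)*)) = dim(D(Ã)/D(A)) = dim(D((Ã)*)/D(B)). -/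

import Mathlib

/-!
The hypotheses force the multivalued parts to agree: an element of `B*(0)` orthogonal to `A(0)`
is orthogonal to the range of `A_s = (B*)_s|D(A)` and hence lies in `B*(0) ∩ N(A*) = {0}`
(`relMul_adjRel_le`). So `A`, `Ã`, `B*` share one multivalued part, and likewise `B`, `Ã*`, `A*`.
Consequently each quotient of domains `D(U)/D(V)` is isomorphic to `U/V`, that is, to the
orthogonal difference `U ⊖ V` in `X × X` (`quotDim_relDom`).

The rotation `(f, g) ↦ (g, -f)` exchanges adjoint and orthogonal complement, so it maps `S* ⊖ T`
onto `T* ⊖ S` (`rank_adjRel_inf_prodOrth`). With `(S, T) = (B, Ã)` and `(A, Ã*)`, together with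
`Ã** = Ã`, this gives `dim D(B*)/D(Ã) = dim D(Ã*)/D(B)` and `dim D(A*)/D(Ã*) = dim D(Ã)/D(A)`.
All four are equal by quasi-selfadjointness, and additivity of dimension along
`D(B) ⊆ D(Ã*) ⊆ D(A*)` yields `n(A*, B)`.
-/

local notation "⟪" x ", " y "⟫" => @inner ℂ _ _ x y

noncomputable section

variable {X : Type*} [NormedAddCommGroup X] [InnerProductSpace ℂ X]

/-- The adjoint `T*` of a linear relation `T ⊆ X × X`:
`T* = {(f,g) : ⟪g,x⟫ = ⟪f,y⟫ for all (x,y) ∈ T}`. -/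
def adjRel (T : Submodule ℂ (X × X)) : Submodule ℂ (X × X) where
  carrier := {p | ∀ q ∈ T, ⟪p.2, q.1⟫ = ⟪p.1, q.2⟫}
  add_mem' := by
    intro p p' hp hp' q hq
    simp only [Prod.fst_add, Prod.snd_add, inner_add_left, hp q hq, hp' q hq]
  zero_mem' := by intro q hq; simp
  smul_mem' := by
    intro c p hp q hq
    simp only [Prod.smul_fst, Prod.smul_snd, inner_smul_left, hp q hq]

/-- The domain `D(T)` of a linear relation. -/
def relDom (T : Submodule ℂ (X × X)) : Submodule ℂ X := T.map (LinearMap.fst ℂ X X)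

/-- The multivalued part `T(0) = {y : (0,y) ∈ T}` of a linear relation. -/
def relMul (T : Submodule ℂ (X × X)) : Submodule ℂ X := T.comap (LinearMap.inr ℂ X X)

/-- The null space `N(T) = {x : (x,0) ∈ T}` of a linear relation. -/
def relKer (T : Submodule ℂ (X × X)) : Submodule ℂ X := T.comap (LinearMap.inl ℂ X X)

/-- The operator part `T_s` of a (closed) linear relation, sending `f ∈ D(T)` to the unique
element of `T(f)` orthogonal to `T(0)` (junk value `0` outside `D(T)`). -/
def opPart (T : Submodule ℂ (X × X)) (f : X) : X :=
  @dite X (∃ y, (f, y) ∈ T ∧ y ∈ (relMul T)ᗮ) (Classical.dec _)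
    (fun h => h.choose) (fun _ => 0)

/-- The composition `S ∘ T = {(x,z) : ∃ y, (x,y) ∈ T and (y,z) ∈ S}` of linear relations. -/
def relComp (S T : Submodule ℂ (X × X)) : Submodule ℂ (X × X) where
  carrier := {p | ∃ y, (p.1, y) ∈ T ∧ (y, p.2) ∈ S}
  add_mem' := by
    rintro p p' ⟨y, h1, h2⟩ ⟨y', h1', h2'⟩
    exact ⟨y + y', T.add_mem h1 h1', S.add_mem h2 h2'⟩
  zero_mem' := ⟨0, T.zero_mem, S.zero_mem⟩
  smul_mem' := by
    rintro c p ⟨y, h1, h2⟩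
    exact ⟨c • y, T.smul_mem c h1, S.smul_mem c h2⟩

/-- `N(1 + R) = {x : (x, -x) ∈ R}` for a linear relation `R`. -/
def relKerOnePlus (R : Submodule ℂ (X × X)) : Submodule ℂ X :=
  R.comap ((LinearMap.id : X →ₗ[ℂ] X).prod (-LinearMap.id))

/-- The dimension of the quotient `U / V` (for submodules `V ⊆ U`). -/
def quotDim (U V : Submodule ℂ X) : Cardinal :=
  Module.rank ℂ (↥U ⧸ V.comap U.subtype)

/-- The relation `S = [[0, A], [B, 0]]` in `X² × X²` associated with a dual pair `{A, B}`:
`S = {((x₁,x₂),(y₁,y₂)) : (x₁,y₂) ∈ B and (x₂,y₁) ∈ A}`. -/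
def dualS (A B : Submodule ℂ (X × X)) : Submodule ℂ ((X × X) × (X × X)) where
  carrier := {p | (p.1.1, p.2.2) ∈ B ∧ (p.1.2, p.2.1) ∈ A}
  add_mem' := by
    rintro p p' ⟨h1, h2⟩ ⟨h1', h2'⟩
    exact ⟨B.add_mem h1 h1', A.add_mem h2 h2'⟩
  zero_mem' := ⟨B.zero_mem, A.zero_mem⟩
  smul_mem' := by
    rintro c p ⟨h1, h2⟩
    exact ⟨B.smul_mem c h1, A.smul_mem c h2⟩

/-- The adjoint of a linear relation in `X × X`, where `X × X` carries the product
inner product `⟪(x₁,x₂),(u₁,u₂)⟫ = ⟪x₁,u₁⟫ + ⟪x₂,u₂⟫`. -/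
def adjRel2 (S : Submodule ℂ ((X × X) × (X × X))) : Submodule ℂ ((X × X) × (X × X)) where
  carrier := {p | ∀ q ∈ S,
    ⟪p.2.1, q.1.1⟫ + ⟪p.2.2, q.1.2⟫ = ⟪p.1.1, q.2.1⟫ + ⟪p.1.2, q.2.2⟫}
  add_mem' := by
    intro p p' hp hp' q hq
    simp only [Prod.fst_add, Prod.snd_add, inner_add_left]
    rw [show ∀ a b c d : ℂ, a + b + (c + d) = a + c + (b + d) by intros; ring,
      hp q hq, hp' q hq]; ring
  zero_mem' := by intro q hq; simp
  smul_mem' := by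
    intro c p hp q hq
    simp only [Prod.smul_fst, Prod.smul_snd, inner_smul_left, ← mul_add, hp q hq]

/-- For a relation `R` on `X × X` and `c : ℂ`, the subspace `{f : (f, c • f) ∈ R}`;
for `R = S*` and `c = ∓i` this is the deficiency space `N(S* ± i)`. -/
def eigenSp (R : Submodule ℂ ((X × X) × (X × X))) (c : ℂ) : Submodule ℂ (X × X) :=
  R.comap ((LinearMap.id : (X × X) →ₗ[ℂ] (X × X)).prod (c • LinearMap.id))


/-! ### Orthogonality in `X × X` -/

/-- The orthogonal complement of `T ⊆ X × X` for the Hilbert-space inner product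
`⟪f, x⟫ + ⟪g, y⟫` on `X × X`. Mathlib's product carries the sup norm and no inner product,
so the complement is spelled out. -/
def prodOrth (T : Submodule ℂ (X × X)) : Submodule ℂ (X × X) where
  carrier := {p | ∀ q ∈ T, ⟪p.1, q.1⟫ + ⟪p.2, q.2⟫ = 0}
  add_mem' := by
    intro p p' hp hp' q hq
    simp only [Prod.fst_add, Prod.snd_add, inner_add_left]
    linear_combination hp q hq + hp' q hq
  zero_mem' := by intro q hq; simp
  smul_mem' := by
    intro c p hp q hq
    simp only [Prod.smul_fst, Prod.smul_snd, inner_smul_left, ← mul_add, hp q hq, mul_zero]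

lemma eq_zero_of_mem_prodOrth {T : Submodule ℂ (X × X)} {p : X × X} (hp : p ∈ T)
    (hp' : p ∈ prodOrth T) : p = 0 := by
  have h : ⟪p.1, p.1⟫ + ⟪p.2, p.2⟫ = 0 := hp' p hp
  have h' : ‖p.1‖ ^ 2 + ‖p.2‖ ^ 2 = 0 := by
    have hre := congrArg Complex.re h
    rw [Complex.add_re, Complex.zero_re] at hre
    rw [← inner_self_eq_norm_sq (𝕜 := ℂ) p.1, ← inner_self_eq_norm_sq (𝕜 := ℂ) p.2]
    exact hre
  have h1 : ‖p.1‖ = 0 := by nlinarith [sq_nonneg ‖p.1‖, sq_nonneg ‖p.2‖]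
  have h2 : ‖p.2‖ = 0 := by nlinarith [sq_nonneg ‖p.1‖, sq_nonneg ‖p.2‖]
  exact Prod.ext (norm_eq_zero.mp h1) (norm_eq_zero.mp h2)

/-- Orthogonal decomposition along a closed subspace of `X × X`, transported from the Hilbert
space `WithLp 2 (X × X)`. -/
lemma exists_sub_mem_prodOrth [CompleteSpace X] {T : Submodule ℂ (X × X)}
    (hT : IsClosed (T : Set (X × X))) (p : X × X) : ∃ a ∈ T, p - a ∈ prodOrth T := by
  let e := WithLp.prodContinuousLinearEquiv 2 ℂ X X
  let K : Submodule ℂ (WithLp 2 (X × X)) := T.comap (e : WithLp 2 (X × X) →ₗ[ℂ] X × X)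
  have hK : IsClosed (K : Set (WithLp 2 (X × X))) := hT.preimage e.continuous
  have : CompleteSpace K := hK.completeSpace_coe
  obtain ⟨y, hy, z, hz, hyz⟩ := K.exists_add_mem_mem_orthogonal (e.symm p)
  refine ⟨e y, hy, fun q hq => ?_⟩
  have hpz : p - e y = e z := by
    rw [← e.apply_symm_apply p, hyz, map_add, add_sub_cancel_left]
  have hq' : e.symm q ∈ K := by
    change e (e.symm q) ∈ T
    rwa [e.apply_symm_apply]
  have h := (Submodule.mem_orthogonal' _ _).mp hz _ hq'
  rw [WithLp.prod_inner_apply] at h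
  rw [hpz]
  exact h

/-! ### Adjoints -/

lemma le_adjRel_symm {S T : Submodule ℂ (X × X)} (h : T ≤ adjRel S) : S ≤ adjRel T := by
  intro p hp q hq
  rw [← inner_conj_symm p.2, ← inner_conj_symm p.1, h hq p hp]

lemma adjRel_anti {S T : Submodule ℂ (X × X)} (h : S ≤ T) : adjRel T ≤ adjRel S :=
  fun _ hp q hq => hp q (h hq)

lemma isClosed_adjRel (T : Submodule ℂ (X × X)) :
    IsClosed (adjRel T : Set (X × X)) := by
  have : (adjRel T : Set (X × X)) = ⋂ q ∈ T, {p | ⟪p.2, q.1⟫ = ⟪p.1, q.2⟫} := by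
    ext p
    simp only [Set.mem_iInter]
    rfl
  rw [this]
  exact isClosed_biInter fun q _ => isClosed_eq (by fun_prop) (by fun_prop)

/-- The rotation `(f, g) ↦ (g, -f)` carries `T*` onto `Tᗮ`. -/
lemma rot_mem_prodOrth {T : Submodule ℂ (X × X)} {p : X × X} :
    (p.2, -p.1) ∈ prodOrth T ↔ p ∈ adjRel T := by
  refine forall₂_congr fun q _ => ?_
  simp only [inner_neg_left, ← sub_eq_add_neg, sub_eq_zero]

/-- The rotation `(f, g) ↦ (g, -f)` carries `Tᗮ` onto `T*`. -/
lemma rot_mem_adjRel {T : Submodule ℂ (X × X)} {p : X × X} :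
    (p.2, -p.1) ∈ adjRel T ↔ p ∈ prodOrth T := by
  refine forall₂_congr fun q _ => ?_
  simp only [inner_neg_left]
  rw [neg_eq_iff_add_eq_zero]

lemma adjRel_adjRel [CompleteSpace X] {T : Submodule ℂ (X × X)}
    (hT : IsClosed (T : Set (X × X))) : adjRel (adjRel T) = T := by
  refine le_antisymm (fun p hp => ?_) (le_adjRel_symm le_rfl)
  obtain ⟨a, ha, hb⟩ := exists_sub_mem_prodOrth hT p
  have hmem : p - a ∈ adjRel (adjRel T) :=
    Submodule.sub_mem _ hp (le_adjRel_symm le_rfl ha)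
  -- The rotated defect lies both in `T*` and in its orthogonal complement.
  have h0 := eq_zero_of_mem_prodOrth (rot_mem_adjRel.mpr hb) (rot_mem_prodOrth.mpr hmem)
  have h1 : (p - a).2 = 0 := congrArg Prod.fst h0
  have h2 : (p - a).1 = 0 := neg_eq_zero.mp (congrArg Prod.snd h0)
  rwa [sub_eq_zero.mp (Prod.ext h2 h1 : p - a = 0)]

/-- The rotation identifies `S* ⊖ T` with `T* ⊖ S`. -/
lemma rank_adjRel_inf_prodOrth (S T : Submodule ℂ (X × X)) :
    Module.rank ℂ ↥(adjRel S ⊓ prodOrth T) = Module.rank ℂ ↥(adjRel T ⊓ prodOrth S) := by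
  let r : X × X →ₗ[ℂ] X × X :=
    (LinearMap.snd ℂ X X).prod (-LinearMap.fst ℂ X X)
  have hr : ∀ p, r p = (p.2, -p.1) := fun _ => rfl
  have hrr : ∀ p, r (r p) = -p := fun _ => rfl
  have hmaps : ∀ (S T : Submodule ℂ (X × X)), ∀ p ∈ adjRel S ⊓ prodOrth T,
      r p ∈ adjRel T ⊓ prodOrth S := fun S T p hp =>
    ⟨rot_mem_adjRel.mpr hp.2, rot_mem_prodOrth.mpr hp.1⟩
  refine LinearEquiv.rank_eq (LinearEquiv.ofBijective (r.restrict (hmaps S T)) ⟨?_, ?_⟩)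
  · intro p q hpq
    have h : r p = r q := congrArg Subtype.val hpq
    have h' : -(p : X × X) = -(q : X × X) := by rw [← hrr, ← hrr, h]
    exact Subtype.ext (neg_injective h')
  · intro p
    refine ⟨-⟨r p, hmaps T S p p.2⟩, Subtype.ext ?_⟩
    change r (-r p) = p
    rw [map_neg, hrr, neg_neg]

/-! ### Dimensions of quotients of domains -/

/-- If `V ⊆ U` have the same multivalued part, then `D(U)/D(V)` is represented by `U ⊖ V`. -/
lemma quotDim_relDom [CompleteSpace X] {U V : Submodule ℂ (X × X)}
    (hV : IsClosed (V : Set (X × X))) (hVU : V ≤ U) (hmul : relMul U ≤ relMul V) :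
    quotDim (relDom U) (relDom V) = Module.rank ℂ ↥(U ⊓ prodOrth V) := by
  let d : ↥(U ⊓ prodOrth V) →ₗ[ℂ] relDom U :=
    (LinearMap.fst ℂ X X).restrict fun p hp => ⟨p, hp.1, rfl⟩
  let φ := ((relDom V).comap (relDom U).subtype).mkQ ∘ₗ d
  refine (LinearEquiv.rank_eq (LinearEquiv.ofBijective φ ⟨?_, ?_⟩)).symm
  · rw [← LinearMap.ker_eq_bot, LinearMap.ker_eq_bot']
    rintro ⟨w, hwU, hwV⟩ hw
    have hw' : w.1 ∈ relDom V :=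
      (Submodule.Quotient.mk_eq_zero ((relDom V).comap (relDom U).subtype)).mp hw
    obtain ⟨v, hv, hvw⟩ := hw'
    have hvw : v.1 = w.1 := hvw
    have h0 : w - v = (0, w.2 - v.2) := Prod.ext (sub_eq_zero.mpr hvw.symm) rfl
    have h1 : w.2 - v.2 ∈ relMul U := by
      change (0, w.2 - v.2) ∈ U
      exact h0 ▸ U.sub_mem hwU (hVU hv)
    have h2 : w - v ∈ V := h0 ▸ hmul h1
    have h3 : w ∈ V := by simpa using V.add_mem h2 hv
    exact Subtype.ext (eq_zero_of_mem_prodOrth h3 hwV)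
  · intro x
    obtain ⟨⟨x, p, hp, rfl⟩, rfl⟩ := Submodule.Quotient.mk_surjective _ x
    obtain ⟨a, ha, hb⟩ := exists_sub_mem_prodOrth hV p
    refine ⟨⟨p - a, U.sub_mem hp (hVU ha), hb⟩, (Submodule.Quotient.eq _).mpr ?_⟩
    change (p - a).1 - p.1 ∈ relDom V
    exact ⟨-a, V.neg_mem ha, by simp⟩

lemma quotDim_add {P Q R : Submodule ℂ X} (hPQ : P ≤ Q) (hQR : Q ≤ R) :
    quotDim R P = quotDim R Q + quotDim Q P := by
  have hle : P.comap R.subtype ≤ Q.comap R.subtype := Submodule.comap_mono hPQ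
  let ι : (↥Q ⧸ P.comap Q.subtype) →ₗ[ℂ] (↥R ⧸ P.comap R.subtype) :=
    Submodule.mapQ _ _ (Submodule.inclusion hQR) (fun _ h => h)
  have hι : Function.Injective ι := by
    rw [← LinearMap.ker_eq_bot, LinearMap.ker_eq_bot']
    intro x hx
    obtain ⟨x, rfl⟩ := Submodule.Quotient.mk_surjective _ x
    exact (Submodule.Quotient.mk_eq_zero _).mpr
      ((Submodule.Quotient.mk_eq_zero (P.comap R.subtype) (x := Submodule.inclusion hQR x)).mp hx)
  have hrange : LinearMap.range ι = (Q.comap R.subtype).map (P.comap R.subtype).mkQ := by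
    apply le_antisymm
    · rintro _ ⟨x, rfl⟩
      obtain ⟨x, rfl⟩ := Submodule.Quotient.mk_surjective _ x
      exact ⟨Submodule.inclusion hQR x, x.2, rfl⟩
    · rintro _ ⟨x, hx, rfl⟩
      exact ⟨Submodule.Quotient.mk ⟨x, hx⟩, rfl⟩
  have h := Submodule.rank_quotient_add_rank (LinearMap.range ι)
  rw [rank_range_of_injective ι hι, hrange,
    (Submodule.quotientQuotientEquivQuotient _ _ hle).rank_eq] at h
  exact h.symm

/-- The codimension of `D(T)` in `D(S*)` equals that of `D(S)` in `D(T*)`, provided no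
multivalued part is lost. -/
lemma quotDim_adjRel [CompleteSpace X] {S T : Submodule ℂ (X × X)}
    (hS : IsClosed (S : Set (X × X))) (hT : IsClosed (T : Set (X × X))) (hTS : T ≤ adjRel S)
    (hmulT : relMul (adjRel S) ≤ relMul T) (hmulS : relMul (adjRel T) ≤ relMul S) :
    quotDim (relDom (adjRel S)) (relDom T) = quotDim (relDom (adjRel T)) (relDom S) := by
  rw [quotDim_relDom hT hTS hmulT, quotDim_relDom hS (le_adjRel_symm hTS) hmulS,
    rank_adjRel_inf_prodOrth]

/-! ### Equality of the multivalued parts -/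

lemma opPart_mem_orthogonal (T : Submodule ℂ (X × X)) (f : X) :
    opPart T f ∈ (relMul T)ᗮ := by
  unfold opPart
  split_ifs with h
  · exact h.choose_spec.2
  · exact Submodule.zero_mem _

lemma isClosed_relMul {T : Submodule ℂ (X × X)} (hT : IsClosed (T : Set (X × X))) :
    IsClosed (relMul T : Set X) :=
  hT.preimage (f := fun y : X => ((0 : X), y)) (by fun_prop)

lemma opPart_mem [CompleteSpace X] {T : Submodule ℂ (X × X)}
    (hT : IsClosed (T : Set (X × X))) {f : X} (hf : f ∈ relDom T) : (f, opPart T f) ∈ T := by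
  have hex : ∃ y, (f, y) ∈ T ∧ y ∈ (relMul T)ᗮ := by
    obtain ⟨⟨f, g⟩, hp, rfl⟩ := hf
    have : CompleteSpace (relMul T) := (isClosed_relMul hT).completeSpace_coe
    obtain ⟨y, hy, z, hz, rfl⟩ := (relMul T).exists_add_mem_mem_orthogonal g
    refine ⟨z, ?_, hz⟩
    have hy' : ((0 : X), y) ∈ T := hy
    simpa using T.sub_mem hp hy'
  unfold opPart
  rw [dif_pos hex]
  exact hex.choose_spec.1

/-- The operator-part condition puts the range of `A_s` inside `B*(0)ᗮ`, so an element of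
`B*(0) ⊖ A(0)` is orthogonal to the whole range of `A`, that is, lies in `N(A*)`; hence it
vanishes and `B*(0) = A(0)`. -/
lemma relMul_adjRel_le [CompleteSpace X] {A B : Submodule ℂ (X × X)}
    (hA : IsClosed (A : Set (X × X))) (hdual : A ≤ adjRel B)
    (hop : ∀ f ∈ relDom A, opPart (adjRel B) f = opPart A f)
    (hmul : relMul (adjRel B) ⊓ relKer (adjRel A) = ⊥) : relMul (adjRel B) ≤ relMul A := by
  intro g hg
  have : CompleteSpace (relMul A) := (isClosed_relMul hA).completeSpace_coe
  obtain ⟨a, ha, h, hh, rfl⟩ := (relMul A).exists_add_mem_mem_orthogonal g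
  have haB : a ∈ relMul (adjRel B) := hdual ha
  have hhB : h ∈ relMul (adjRel B) := by simpa using Submodule.sub_mem _ hg haB
  have hhA : h ∈ relKer (adjRel A) := by
    rintro ⟨x, y⟩ hxy
    change ⟪(0 : X), x⟫ = ⟪h, y⟫
    have hx : x ∈ relDom A := ⟨(x, y), hxy, rfl⟩
    have h1 : ⟪h, opPart A x⟫ = 0 := by
      rw [← hop x hx]
      exact (Submodule.mem_orthogonal _ _).mp (opPart_mem_orthogonal _ x) h hhB
    have h2 : y - opPart A x ∈ relMul A := by
      change ((0 : X), y - opPart A x) ∈ A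
      simpa using A.sub_mem hxy (opPart_mem hA hx)
    have h3 : ⟪h, y - opPart A x⟫ = 0 := (Submodule.mem_orthogonal' _ _).mp hh _ h2
    rw [inner_sub_right, h1, sub_zero] at h3
    rw [h3, inner_zero_left]
  have h0 : h ∈ relMul (adjRel B) ⊓ relKer (adjRel A) := ⟨hhB, hhA⟩
  rw [hmul, Submodule.mem_bot] at h0
  simpa [h0] using ha

/-- Theorem 3.3(ii). If `At` is a quasi-selfadjoint extension of `{A,B}`
(i.e. a proper extension with `dim(D(At)/D(A)) = dim(D(At*)/D(B))`), then `n(A*,B)` is even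
and `n(A*,B)/2 = dim(D(B*)/D(At)) = dim(D(A*)/D(At*)) = dim(D(At)/D(A)) = dim(D(At*)/D(B))`. -/
theorem quasi_selfadjoint_halves [CompleteSpace X] (A B At : Submodule ℂ (X × X))
    (hA : IsClosed (A : Set (X × X))) (hB : IsClosed (B : Set (X × X)))
    (hdual : A ≤ adjRel B)
    (hopB : ∀ f ∈ relDom B, opPart (adjRel A) f = opPart B f)
    (hopA : ∀ f ∈ relDom A, opPart (adjRel B) f = opPart A f)
    (hmul1 : relMul (adjRel B) ⊓ relKer (adjRel A) = ⊥)
    (hmul2 : relMul (adjRel A) ⊓ relKer (adjRel B) = ⊥)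
    (hAt : IsClosed (At : Set (X × X))) (hAAt : A ≤ At) (hAtB : At ≤ adjRel B)
    (hquasi : quotDim (relDom At) (relDom A) = quotDim (relDom (adjRel At)) (relDom B)) :
    ∃ c : Cardinal,
      quotDim (relDom (adjRel A)) (relDom B) = c + c ∧
      quotDim (relDom (adjRel B)) (relDom At) = c ∧
      quotDim (relDom (adjRel A)) (relDom (adjRel At)) = c ∧
      quotDim (relDom At) (relDom A) = c ∧
      quotDim (relDom (adjRel At)) (relDom B) = c := by
  have hBA : B ≤ adjRel A := le_adjRel_symm hdual
  have hBAt : B ≤ adjRel At := le_adjRel_symm hAtB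
  have hAtA : adjRel At ≤ adjRel A := adjRel_anti hAAt
  have hmA : relMul (adjRel B) ≤ relMul A := relMul_adjRel_le hA hdual hopA hmul1
  have hmB : relMul (adjRel A) ≤ relMul B := relMul_adjRel_le hB hBA hopB hmul2
  have mono : ∀ {S T : Submodule ℂ (X × X)}, S ≤ T → relMul S ≤ relMul T :=
    fun h => Submodule.comap_mono h
  have e1 : quotDim (relDom (adjRel B)) (relDom At) = quotDim (relDom (adjRel At)) (relDom B) :=
    quotDim_adjRel hB hAt hAtB (hmA.trans (mono hAAt)) ((mono hAtA).trans hmB)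
  have e2 : quotDim (relDom (adjRel A)) (relDom (adjRel At)) =
      quotDim (relDom At) (relDom A) := by
    have h := quotDim_adjRel hA (isClosed_adjRel At) hAtA (hmB.trans (mono hBAt))
      (by rw [adjRel_adjRel hAt]; exact (mono hAtB).trans hmA)
    rwa [adjRel_adjRel hAt] at h
  refine ⟨quotDim (relDom (adjRel At)) (relDom B), ?_, e1, e2.trans hquasi, hquasi, rfl⟩
  have hdomB : relDom B ≤ relDom (adjRel At) := Submodule.map_mono hBAt
  have hdomA : relDom (adjRel At) ≤ relDom (adjRel A) := Submodule.map_mono hAtA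
  rw [quotDim_add hdomB hdomA, e2, hquasi]

end
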